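/- arXiv:2010.01882 — 5 statements merged into one kernel-verified Lean document; each statement's English description precedes it below -/
import Mathlib

section
/- The number of 3-element subsets of the SET deck that are Sets is exactly 1080. -/
/-- A card of the SET deck: four attributes, each with three values. -/
abbrev Card := Fin 4 → Fin 3

/-- A finite set of cards is a `Set` if it has three cards and, in each attribute,
the values are either all equal or pairwise distinct. -/
def IsSet (s : Finset Card) : Prop :=
  s.card = 3 ∧ ∀ a : Fin 4,
    (∀ x ∈ s, ∀ y ∈ s, x a = y a) ∨ (∀ x ∈ s, ∀ y ∈ s, x ≠ y → x a ≠ y a)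

instance : DecidablePred IsSet := fun s => by
  have : ∀ a : Fin 4,
      Decidable ((∀ x ∈ s, ∀ y ∈ s, x a = y a) ∨ ∀ x ∈ s, ∀ y ∈ s, x ≠ y → x a ≠ y a) :=
    fun _ => instDecidableOr
  unfold IsSet
  infer_instance

def third (x y : Card) : Card := fun a => -(x a + y a)

theorem third_ne_left {x y : Card} (h : x ≠ y) : third x y ≠ x := by
  intro e
  apply h
  funext a
  have := congrFun e a
  simp only [third] at this
  generalize x a = p at *
  generalize y a = q at *
  revert p q
  decide

theorem third_ne_right {x y : Card} (h : x ≠ y) : third x y ≠ y := by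
  intro e
  apply h
  funext a
  have := congrFun e a
  simp only [third] at this
  generalize x a = p at *
  generalize y a = q at *
  revert p q
  decide

theorem isSet_third {x y : Card} (h : x ≠ y) : IsSet {x, y, third x y} := by
  refine ⟨Finset.card_eq_three.2
    ⟨x, y, third x y, h, (third_ne_left h).symm, (third_ne_right h).symm, rfl⟩, fun a => ?_⟩
  have key : ∀ p q : Fin 3, (p = q ∧ -(p + q) = p) ∨
      (p ≠ q ∧ -(p + q) ≠ p ∧ -(p + q) ≠ q) := by decide
  have k : (x a = y a ∧ third x y a = x a) ∨
      (x a ≠ y a ∧ third x y a ≠ x a ∧ third x y a ≠ y a) := key (x a) (y a)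
  generalize third x y = z at *
  simp only [Finset.mem_insert, Finset.mem_singleton]
  rcases k with ⟨h1, h2⟩ | ⟨h1, h2, h3⟩
  · left
    rintro u (rfl | rfl | rfl) v (rfl | rfl | rfl) <;> simp_all
  · right
    rintro u (rfl | rfl | rfl) v (rfl | rfl | rfl) huv <;>
      first | exact absurd rfl huv | assumption | (apply Ne.symm; assumption)

theorem eq_third {s : Finset Card} (hs : IsSet s) {x y : Card} (hx : x ∈ s) (hy : y ∈ s)
    (h : x ≠ y) : {x, y, third x y} = s := by
  obtain ⟨hc, ha⟩ := hs
  have h1 : ((s.erase x).erase y).card = 1 := by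
    rw [Finset.card_erase_of_mem (Finset.mem_erase.2 ⟨h.symm, hy⟩), Finset.card_erase_of_mem hx, hc]
  obtain ⟨z, hz⟩ := Finset.card_pos.1 (by rw [h1]; exact one_pos)
  simp only [Finset.mem_erase] at hz
  obtain ⟨hzy, hzx, hzs⟩ := hz
  have e : third x y = z := by
    funext a
    have k1 : ∀ p : Fin 3, -(p + p) = p := by decide
    have k2 : ∀ p q r : Fin 3, p ≠ q → r ≠ p → r ≠ q → -(p + q) = r := by decide
    rcases ha a with ha | ha
    · simp only [third]
      rw [ha y hy x hx, ha z hzs x hx]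
      exact k1 _
    · exact k2 _ _ _ (ha x hx y hy h) (ha z hzs x hx hzx) (ha z hzs y hy hzy)
  rw [e]
  apply Finset.eq_of_subset_of_card_le
  · intro u hu
    simp only [Finset.mem_insert, Finset.mem_singleton] at hu
    rcases hu with rfl | rfl | rfl <;> assumption
  · rw [hc, Finset.card_eq_three.2 ⟨x, y, z, h, hzx.symm, hzy.symm, rfl⟩]

theorem count_aux (T : Finset (Finset Card)) (hT : ∀ s, s ∈ T ↔ IsSet s) : T.card = 1080 := by
  have h81 : (Finset.univ : Finset Card).card = 81 := by
    rw [Finset.card_univ, Fintype.card_fun, Fintype.card_fin, Fintype.card_fin]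
    norm_num
  generalize hU : (Finset.univ : Finset Card) = U at h81
  have hUm : ∀ x, x ∈ U := fun x => hU ▸ Finset.mem_univ x
  clear hU
  let f : Card × Card → Finset Card := fun p => {p.1, p.2, third p.1 p.2}
  have hm : Set.MapsTo f (U.offDiag : Set (Card × Card)) (T : Set (Finset Card)) := by
    intro p hp
    exact (hT _).2 (isSet_third (Finset.mem_offDiag.1 hp).2.2)
  have hcard := Finset.card_eq_sum_card_fiberwise hm
  have hfib : ∀ s ∈ T, (U.offDiag.filter (fun p => f p = s)).card = 6 := by
    intro s hs
    have h := (hT s).1 hs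
    have e : U.offDiag.filter (fun p => f p = s) = s.offDiag := by
      ext ⟨x, y⟩
      simp only [Finset.mem_filter, Finset.mem_offDiag, hUm, true_and]
      constructor
      · rintro ⟨hne, rfl⟩
        simp [f, hne]
      · rintro ⟨hx, hy, hne⟩
        exact ⟨hne, eq_third h hx hy hne⟩
    rw [e, Finset.offDiag_card, h.1]
  rw [Finset.sum_congr rfl hfib, Finset.sum_const, Finset.offDiag_card, h81, smul_eq_mul] at hcard
  omega

/-- There are exactly 1080 three-card `Sets` in the SET deck. -/
theorem card_sets_eq_1080 :
    (((Finset.univ : Finset Card).powersetCard 3).filter IsSet).card = 1080 := by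
  set T := ((Finset.univ : Finset Card).powersetCard 3).filter IsSet with hT
  have hTm : ∀ s, s ∈ T ↔ IsSet s := by
    intro s
    rw [hT, Finset.mem_filter, Finset.mem_powersetCard]
    exact ⟨fun h => h.2, fun h => ⟨⟨Finset.subset_univ _, h.1⟩, h⟩⟩
  clear_value T
  clear hT
  exact count_aux T hTm
end

section
/- Two 2-card hands {x, y} and {x', y'} of the SET deck are isomorphic if and only if the number of attributes in which x and y agree equals the number of attributes in which x' and y' agree. -/
/-- The deck map induced by a permutation `ψ` of attributes and a family `θ` of value
permutations: it sends a card `x` to the card `y` with `y (ψ a) = θ a (x a)` for all `a`. -/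
def deckMap (ψ : Equiv.Perm (Fin 4)) (θ : Fin 4 → Equiv.Perm (Fin 3)) (x : Card) : Card :=
  fun b => θ (ψ.symm b) (x (ψ.symm b))

/-- Two hands are isomorphic if some induced deck map restricts to a bijection
of one onto the other. -/
def Isomorphic (H H' : Finset Card) : Prop :=
  ∃ (ψ : Equiv.Perm (Fin 4)) (θ : Fin 4 → Equiv.Perm (Fin 3)),
    H.image (deckMap ψ θ) = H'

/-- The number of attributes in which two cards agree. -/
def agreeCount (x y : Card) : ℕ :=
  (Finset.univ.filter fun a : Fin 4 => x a = y a).card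

theorem agreeCount_deckMap (ψ : Equiv.Perm (Fin 4)) (θ : Fin 4 → Equiv.Perm (Fin 3))
    (x y : Card) : agreeCount (deckMap ψ θ x) (deckMap ψ θ y) = agreeCount x y := by
  unfold agreeCount deckMap
  refine Finset.card_equiv ψ.symm ?_
  intro i
  simp

theorem agreeCount_comm (x y : Card) : agreeCount x y = agreeCount y x := by
  unfold agreeCount
  simp only [eq_comm]

theorem exists_perm_three : ∀ p q r s : Fin 3, (p = q ↔ r = s) →
    ∃ σ : Equiv.Perm (Fin 3), σ p = r ∧ σ q = s := by
  decide

/-- Two 2-card hands `{x, y}` and `{x', y'}` are isomorphic if and only if the number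
of attributes in which `x` and `y` agree equals the number of attributes in which
`x'` and `y'` agree. -/
theorem two_card_hands_isomorphic_iff (x y x' y' : Card) (hxy : x ≠ y) (hxy' : x' ≠ y') :
    Isomorphic {x, y} {x', y'} ↔ agreeCount x y = agreeCount x' y' := by
  constructor
  · rintro ⟨ψ, θ, h⟩
    rw [Finset.image_insert, Finset.image_singleton] at h
    have h2 : ({deckMap ψ θ x, deckMap ψ θ y} : Set Card) = {x', y'} := by
      have := congrArg (fun s : Finset Card => (s : Set Card)) h
      simpa using this
    rw [← agreeCount_deckMap ψ θ x y]
    rcases Set.pair_eq_pair_iff.1 h2 with ⟨h1, h2⟩ | ⟨h1, h2⟩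
    · rw [h1, h2]
    · rw [h1, h2, agreeCount_comm]
  · intro h
    have hc : Fintype.card {a : Fin 4 // x a = y a} = Fintype.card {a : Fin 4 // x' a = y' a} := by
      rw [Fintype.card_subtype, Fintype.card_subtype]
      exact h
    let e := Fintype.equivOfCardEq hc
    let ψ : Equiv.Perm (Fin 4) := e.extendSubtype
    have hψ : ∀ a, x a = y a ↔ x' (ψ a) = y' (ψ a) := by
      intro a
      constructor
      · exact fun ha => e.extendSubtype_mem a ha
      · intro ha
        by_contra hn
        exact e.extendSubtype_not_mem a hn ha
    choose θ h1 h2 using fun a => exists_perm_three _ _ _ _ (hψ a)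
    refine ⟨ψ, θ, ?_⟩
    have e1 : deckMap ψ θ x = x' := by
      funext b
      simp [deckMap, h1]
    have e2 : deckMap ψ θ y = y' := by
      funext b
      simp [deckMap, h2]
    rw [Finset.image_insert, Finset.image_singleton, e1, e2]
end

section
/- Two three-card hands of the SET deck are isomorphic if and only if they have the same symbol. -/
/-- The number of attributes common to all three cards. -/
def tCount (x y z : Card) : ℕ :=
  (Finset.univ.filter fun a : Fin 4 => x a = y a ∧ y a = z a).card

/-- The pair-count of the pair `(x, y)` within the triple `{x, y, z}`: the number of
attributes at which `x` and `y` agree but not all three cards agree. -/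
def pairCount (x y z : Card) : ℕ :=
  (Finset.univ.filter fun a : Fin 4 => x a = y a ∧ y a ≠ z a).card

/-- The symbol of a three-card hand `{x, y, z}`: the number of all-common attributes,
together with the (unordered) multiset of the three pair-counts. -/
def symbol (x y z : Card) : ℕ × Multiset ℕ :=
  (tCount x y z, {pairCount x y z, pairCount y z x, pairCount z x y})

def ty (u v w : Fin 3) : Fin 5 :=
  if u = v then (if v = w then 0 else 1) else if v = w then 2 else if w = u then 3 else 4

lemma ty_zero : ∀ u v w : Fin 3, ty u v w = 0 ↔ (u = v ∧ v = w) := by decide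
lemma ty_one : ∀ u v w : Fin 3, ty u v w = 1 ↔ (u = v ∧ v ≠ w) := by decide
lemma ty_two : ∀ u v w : Fin 3, ty u v w = 2 ↔ (v = w ∧ w ≠ u) := by decide
lemma ty_three : ∀ u v w : Fin 3, ty u v w = 3 ↔ (w = u ∧ u ≠ v) := by decide

set_option maxRecDepth 100000 in
lemma exists_perm_of_ty : ∀ u v w u' v' w' : Fin 3, ty u v w = ty u' v' w' →
    ∃ s : Equiv.Perm (Fin 3), s u = u' ∧ s v = v' ∧ s w = w' := by
  decide +kernel

lemma exists_map (x y z x' y' z' : Card) (ht : tCount x y z = tCount x' y' z')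
    (h1 : pairCount x y z = pairCount x' y' z')
    (h2 : pairCount y z x = pairCount y' z' x')
    (h3 : pairCount z x y = pairCount z' x' y') :
    ∃ ψ θ, deckMap ψ θ x = x' ∧ deckMap ψ θ y = y' ∧ deckMap ψ θ z = z' := by
  let f : Fin 4 → Fin 5 := fun a => ty (x a) (y a) (z a)
  let g : Fin 4 → Fin 5 := fun a => ty (x' a) (y' a) (z' a)
  have e0 : (Finset.univ.filter fun a => f a = 0).card =
      (Finset.univ.filter fun a => g a = 0).card := by
    simpa only [f, g, ty_zero, tCount, pairCount] using ht
  have e1 : (Finset.univ.filter fun a => f a = 1).card =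
      (Finset.univ.filter fun a => g a = 1).card := by
    simpa only [f, g, ty_one, tCount, pairCount] using h1
  have e2 : (Finset.univ.filter fun a => f a = 2).card =
      (Finset.univ.filter fun a => g a = 2).card := by
    simpa only [f, g, ty_two, tCount, pairCount] using h2
  have e3 : (Finset.univ.filter fun a => f a = 3).card =
      (Finset.univ.filter fun a => g a = 3).card := by
    simpa only [f, g, ty_three, tCount, pairCount] using h3
  have sf := Finset.card_eq_sum_card_fiberwise (f := f) (s := Finset.univ) (t := Finset.univ)
    (fun _ _ => by simp)
  have sg := Finset.card_eq_sum_card_fiberwise (f := g) (s := Finset.univ) (t := Finset.univ)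
    (fun _ _ => by simp)
  have e : ∀ c, (Finset.univ.filter fun a => f a = c).card =
      (Finset.univ.filter fun a => g a = c).card := by
    rw [Fin.sum_univ_five] at sf sg
    intro c
    fin_cases c
    · exact e0
    · exact e1
    · exact e2
    · exact e3
    · show (Finset.univ.filter fun a => f a = 4).card =
        (Finset.univ.filter fun a => g a = 4).card
      omega
  have e' : ∀ c, Nonempty ({a // f a = c} ≃ {a // g a = c}) := fun c => by
    rw [← Fintype.card_eq, Fintype.card_subtype, Fintype.card_subtype]
    exact e c
  let ψ : Equiv.Perm (Fin 4) := Equiv.ofFiberEquiv (fun c => (e' c).some)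
  have hψ : ∀ a, g (ψ a) = f a := fun a => Equiv.ofFiberEquiv_map _ a
  have := fun a => exists_perm_of_ty _ _ _ _ _ _ (hψ a).symm
  choose θ h using this
  refine ⟨ψ, θ, ?_, ?_, ?_⟩ <;> funext b
  · simpa [deckMap] using (h (ψ.symm b)).1
  · simpa [deckMap] using (h (ψ.symm b)).2.1
  · simpa [deckMap] using (h (ψ.symm b)).2.2

lemma card_map (ψ : Equiv.Perm (Fin 4)) (p q : Fin 4 → Prop) [DecidablePred p] [DecidablePred q]
    (h : ∀ b, p b ↔ q (ψ.symm b)) :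
    (Finset.univ.filter p).card = (Finset.univ.filter q).card :=
  Finset.card_equiv ψ.symm (by simp [h])

lemma symbol_map (ψ θ) (x y z : Card) :
    symbol (deckMap ψ θ x) (deckMap ψ θ y) (deckMap ψ θ z) = symbol x y z := by
  have ht : ∀ x y z, tCount (deckMap ψ θ x) (deckMap ψ θ y) (deckMap ψ θ z) = tCount x y z :=
    fun x y z => card_map ψ _ _ (by simp [deckMap])
  have hp : ∀ x y z, pairCount (deckMap ψ θ x) (deckMap ψ θ y) (deckMap ψ θ z)
      = pairCount x y z :=
    fun x y z => card_map ψ _ _ (by simp [deckMap])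
  simp only [symbol, ht, hp]

lemma tCount_swap (x y z : Card) : tCount x y z = tCount y x z := by
  unfold tCount; congr 1; ext a; simp; grind
lemma tCount_rot (x y z : Card) : tCount x y z = tCount y z x := by
  unfold tCount; congr 1; ext a; simp; grind
lemma pairCount_swap (x y z : Card) : pairCount x y z = pairCount y x z := by
  unfold pairCount; congr 1; ext a; simp; grind

lemma mrot {α : Type} (a b c : α) : ({a, b, c} : Multiset α) = {b, c, a} := by
  simp only [Multiset.insert_eq_cons, ← Multiset.singleton_add]; abel
lemma mswap {α : Type} (a b c : α) : ({a, b, c} : Multiset α) = {a, c, b} := by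
  simp only [Multiset.insert_eq_cons, ← Multiset.singleton_add]; abel

lemma symbol_rot (x y z : Card) : symbol x y z = symbol y z x := by
  simp only [symbol]; rw [tCount_rot, mrot]
lemma symbol_swap (x y z : Card) : symbol x y z = symbol y x z := by
  simp only [symbol]
  rw [tCount_swap, mswap, pairCount_swap x y, pairCount_swap z x, pairCount_swap y z]

lemma mcases (a b c a' b' c' : ℕ) (h : ({a, b, c} : Multiset ℕ) = {a', b', c'}) :
    (a = a' ∧ b = b' ∧ c = c') ∨ (a = a' ∧ b = c' ∧ c = b') ∨
    (a = b' ∧ b = a' ∧ c = c') ∨ (a = b' ∧ b = c' ∧ c = a') ∨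
    (a = c' ∧ b = a' ∧ c = b') ∨ (a = c' ∧ b = b' ∧ c = a') := by
  have two : ∀ p q r s : ℕ, ({p, q} : Multiset ℕ) = {r, s} → (p = r ∧ q = s) ∨ (p = s ∧ q = r) := by
    intro p q r s h
    have hp : p ∈ ({r, s} : Multiset ℕ) := h ▸ (by simp)
    simp only [Multiset.insert_eq_cons, Multiset.mem_cons, Multiset.mem_singleton] at hp
    rcases hp with rfl | rfl
    · left; simpa using h
    · right; rw [Multiset.pair_comm r] at h; simpa using h
  have ha : a ∈ ({a', b', c'} : Multiset ℕ) := h ▸ (by simp)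
  simp only [Multiset.insert_eq_cons, Multiset.mem_cons, Multiset.mem_singleton] at ha
  rcases ha with rfl | rfl | rfl
  · have := two b c b' c' ((Multiset.cons_inj_right a).1 h)
    tauto
  · rw [mrot a'] at h
    have := two b c c' a' ((Multiset.cons_inj_right a).1 h)
    tauto
  · rw [← mrot a] at h
    have := two b c a' b' ((Multiset.cons_inj_right a).1 h)
    tauto

/-- Two three-card hands are isomorphic if and only if they have the same symbol. -/
theorem three_card_hands_isomorphic_iff_symbol_eq
    (x y z x' y' z' : Card)
    (hxy : x ≠ y) (hxz : x ≠ z) (hyz : y ≠ z)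
    (hxy' : x' ≠ y') (hxz' : x' ≠ z') (hyz' : y' ≠ z') :
    Isomorphic {x, y, z} {x', y', z'} ↔ symbol x y z = symbol x' y' z' := by
  constructor
  · rintro ⟨ψ, θ, h⟩
    rw [← symbol_map ψ θ x y z]
    simp only [Finset.image_insert, Finset.image_singleton] at h
    generalize deckMap ψ θ x = u at *
    generalize deckMap ψ θ y = v at *
    generalize deckMap ψ θ z = w at *
    have hx : x' ∈ ({u, v, w} : Finset Card) := h ▸ (by simp)
    have hy : y' ∈ ({u, v, w} : Finset Card) := h ▸ (by simp)
    have hz : z' ∈ ({u, v, w} : Finset Card) := h ▸ (by simp)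
    clear h
    simp only [Finset.mem_insert, Finset.mem_singleton] at hx hy hz
    have := symbol_rot
    have := symbol_swap
    rcases hx with rfl | rfl | rfl <;> rcases hy with rfl | rfl | rfl <;>
      rcases hz with rfl | rfl | rfl <;> grind
  · intro h
    simp only [symbol, Prod.mk.injEq] at h
    obtain ⟨ht, h⟩ := h
    have fin : ∀ a b c : Card, tCount x y z = tCount a b c → pairCount x y z = pairCount a b c →
        pairCount y z x = pairCount b c a → pairCount z x y = pairCount c a b →
        ({a, b, c} : Finset Card) = {x', y', z'} → Isomorphic {x, y, z} {x', y', z'} := by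
      intro a b c h0 h1 h2 h3 h4
      obtain ⟨ψ, θ, r1, r2, r3⟩ := exists_map x y z a b c h0 h1 h2 h3
      refine ⟨ψ, θ, ?_⟩
      rw [← h4]
      simp [Finset.image_insert, r1, r2, r3]
    have T := tCount_swap
    have R := tCount_rot
    have P := pairCount_swap
    rcases mcases _ _ _ _ _ _ h with h | h | h | h | h | h <;> obtain ⟨h1, h2, h3⟩ := h
    · exact fin x' y' z' (by grind) (by grind) (by grind) (by grind) rfl
    · exact fin y' x' z' (by grind) (by grind) (by grind) (by grind) (by clear * -; ext w; simp only [Finset.mem_insert, Finset.mem_singleton]; grind)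
    · exact fin z' y' x' (by grind) (by grind) (by grind) (by grind) (by clear * -; ext w; simp only [Finset.mem_insert, Finset.mem_singleton]; grind)
    · exact fin y' z' x' (by grind) (by grind) (by grind) (by grind) (by clear * -; ext w; simp only [Finset.mem_insert, Finset.mem_singleton]; grind)
    · exact fin z' x' y' (by grind) (by grind) (by grind) (by grind) (by clear * -; ext w; simp only [Finset.mem_insert, Finset.mem_singleton]; grind)
    · exact fin x' z' y' (by grind) (by grind) (by grind) (by grind) (by clear * -; ext w; simp only [Finset.mem_insert, Finset.mem_singleton]; grind)
end

section
/- The number of isomorphism classes of three-card hands of the SET deck is exactly 20; that is, the quotient of the set of 3-element subsets of the deck by the isomorphism relation has exactly 20 elements. -/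
/-- The coincidence pattern of three values. -/
def cls (u v w : Fin 3) : Fin 5 :=
  if u = v then (if v = w then 0 else 4) else if v = w then 2 else if u = w then 3 else 1

/-- Number of attributes with pattern `j`. -/
def cnt (x y z : Card) (j : Fin 5) : ℕ :=
  (Finset.univ.filter fun a : Fin 4 => cls (x a) (y a) (z a) = j).card

/-- The numerical invariant of a hand. -/
def hinv (H : Finset Card) : ℕ × ℕ × ℕ :=
  ((Finset.univ.filter fun a : Fin 4 => ∀ x ∈ H, ∀ y ∈ H, x a = y a).card,
   (Finset.univ.filter fun a : Fin 4 => ∀ x ∈ H, ∀ y ∈ H, x a = y a → x = y).card,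
   (Finset.univ.filter fun p : Fin 4 × Fin 4 =>
      ∀ x ∈ H, ∀ y ∈ H, (x p.1 = y p.1 ↔ x p.2 = y p.2)).card)

/-- The possible sorted count vectors. -/
def tups : Finset (ℕ × ℕ × ℕ × ℕ × ℕ) :=
  {(3,1,0,0,0), (2,2,0,0,0), (1,3,0,0,0), (0,4,0,0,0),
   (2,1,1,0,0), (1,2,1,0,0), (0,3,1,0,0),
   (1,1,2,0,0), (0,2,2,0,0), (2,0,1,1,0), (1,1,1,1,0), (0,2,1,1,0),
   (0,1,3,0,0), (1,0,2,1,0), (0,1,2,1,0), (1,0,1,1,1), (0,1,1,1,1),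
   (0,0,3,1,0), (0,0,2,2,0), (0,0,2,1,1)}

/-- The invariant computed from the count vector. -/
def tf (t : ℕ × ℕ × ℕ × ℕ × ℕ) : ℕ × ℕ × ℕ :=
  (t.1, t.2.1, t.1 ^ 2 + t.2.1 ^ 2 + t.2.2.1 ^ 2 + t.2.2.2.1 ^ 2 + t.2.2.2.2 ^ 2)

/-- The count vector of a triple. -/
def vec (x y z : Card) : ℕ × ℕ × ℕ × ℕ × ℕ :=
  (cnt x y z 0, cnt x y z 1, cnt x y z 2, cnt x y z 3, cnt x y z 4)

lemma tf_inj : ∀ t ∈ tups, ∀ t' ∈ tups, tf t = tf t' → t = t' := by decide +kernel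

lemma tf_card : (tups.image tf).card = 20 := by decide +kernel

lemma mem_tups (s d p q r : ℕ) (h : s + d + p + q + r = 4) (h1 : q ≤ p) (h2 : r ≤ q)
    (h3 : s + p < 4) : (s, d, p, q, r) ∈ tups := by
  have key : ∀ s p q r : Fin 5, (s.1 + p.1 + q.1 + r.1 ≤ 4 ∧ q.1 ≤ p.1 ∧ r.1 ≤ q.1 ∧
      s.1 + p.1 < 4) → (s.1, 4 - (s.1 + p.1 + q.1 + r.1), p.1, q.1, r.1) ∈ tups := by
    decide +kernel
  have := key ⟨s, by omega⟩ ⟨p, by omega⟩ ⟨q, by omega⟩ ⟨r, by omega⟩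
    ⟨by dsimp only; omega, h1, h2, h3⟩
  have e : d = 4 - (s + p + q + r) := by omega
  rw [e]; exact this

lemma deckMap_apply (ψ : Equiv.Perm (Fin 4)) (θ : Fin 4 → Equiv.Perm (Fin 3)) (x : Card)
    (a : Fin 4) : deckMap ψ θ x (ψ a) = θ a (x a) := by
  simp [deckMap]

lemma deckMap_inj (ψ : Equiv.Perm (Fin 4)) (θ : Fin 4 → Equiv.Perm (Fin 3)) :
    Function.Injective (deckMap ψ θ) := by
  intro x y h
  funext a
  have := congrFun h (ψ a)
  simpa [deckMap_apply] using this

lemma hinv_iso {H H' : Finset Card} (h : Isomorphic H H') : hinv H = hinv H' := by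
  obtain ⟨ψ, θ, rfl⟩ := h
  unfold hinv
  refine Prod.ext ?_ (Prod.ext ?_ ?_) <;> dsimp only
  · refine Finset.card_equiv ψ fun a => ?_
    simp [deckMap_apply]
  · refine Finset.card_equiv ψ fun a => ?_
    simp [deckMap_apply, (deckMap_inj ψ θ).eq_iff]
  · refine Finset.card_equiv (ψ.prodCongr ψ) fun a => ?_
    simp [deckMap_apply]

lemma cnt_sum (x y z : Card) :
    cnt x y z 0 + cnt x y z 1 + cnt x y z 2 + cnt x y z 3 + cnt x y z 4 = 4 := by
  have := Finset.card_eq_sum_card_fiberwise (s := (Finset.univ : Finset (Fin 4)))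
    (t := (Finset.univ : Finset (Fin 5))) (f := fun a => cls (x a) (y a) (z a)) (by simp)
  simp only [Fin.sum_univ_five, Finset.card_univ, Fintype.card_fin] at this
  exact this.symm

lemma pair_count (k : Fin 4 → Fin 5) :
    (Finset.univ.filter fun p : Fin 4 × Fin 4 => k p.1 = k p.2).card =
      ∑ j, (Finset.univ.filter fun a => k a = j).card ^ 2 := by
  rw [Finset.card_eq_sum_card_fiberwise (t := (Finset.univ : Finset (Fin 5)))
    (f := fun p => k p.1) (by simp)]
  refine Finset.sum_congr rfl fun j _ => ?_
  rw [sq, ← Finset.card_product]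
  congr 1
  ext ⟨a, b⟩
  simp only [Finset.mem_filter, Finset.mem_univ, true_and, Finset.mem_product]
  constructor
  · rintro ⟨h, h'⟩; exact ⟨h', h ▸ h'⟩
  · rintro ⟨h, h'⟩; exact ⟨h.trans h'.symm, h⟩

lemma cls0 : ∀ u v w : Fin 3, cls u v w = 0 ↔ (u = v ∧ u = w ∧ v = w) := by decide
lemma cls1 : ∀ u v w : Fin 3, cls u v w = 1 ↔ (u ≠ v ∧ u ≠ w ∧ v ≠ w) := by decide
lemma cls_eq : ∀ u v w u' v' w' : Fin 3, cls u v w = cls u' v' w' ↔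
    ((u = v ↔ u' = v') ∧ (u = w ↔ u' = w') ∧ (v = w ↔ v' = w')) := by decide +kernel
lemma cls_perm : ∀ u v w u' v' w' : Fin 3, cls u v w = cls u' v' w' →
    ∃ θ : Equiv.Perm (Fin 3), θ u = u' ∧ θ v = v' ∧ θ w = w' := by decide +kernel

lemma hinv_triple (x y z : Card) (hxy : x ≠ y) (hxz : x ≠ z) (hyz : y ≠ z) :
    hinv {x, y, z} = tf (vec x y z) := by
  unfold hinv tf vec cnt
  refine Prod.ext ?_ (Prod.ext ?_ ?_) <;> dsimp only
  · refine congrArg Finset.card (Finset.filter_congr fun a _ => ?_)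
    rw [cls0]
    simp only [Finset.mem_insert, Finset.mem_singleton, forall_eq_or_imp, forall_eq]
    grind
  · refine congrArg Finset.card (Finset.filter_congr fun a _ => ?_)
    rw [cls1]
    simp only [Finset.mem_insert, Finset.mem_singleton, forall_eq_or_imp, forall_eq]
    grind
  · have := pair_count fun a => cls (x a) (y a) (z a)
    simp only [Fin.sum_univ_five] at this
    refine Eq.trans (congrArg Finset.card (Finset.filter_congr fun a _ => ?_)) this
    rw [cls_eq]
    simp only [Finset.mem_insert, Finset.mem_singleton, forall_eq_or_imp, forall_eq]
    grind

lemma cls_s12 : ∀ u v w : Fin 3, cls v u w = Equiv.swap 2 3 (cls u v w) := by decide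
lemma cls_s23 : ∀ u v w : Fin 3, cls u w v = Equiv.swap 3 4 (cls u v w) := by decide

lemma cnt_s12 (x y z : Card) (j : Fin 5) : cnt y x z j = cnt x y z (Equiv.swap 2 3 j) := by
  refine congrArg Finset.card (Finset.filter_congr fun a _ => ?_)
  rw [cls_s12, Equiv.swap_apply_eq_iff]
lemma cnt_s23 (x y z : Card) (j : Fin 5) : cnt x z y j = cnt x y z (Equiv.swap 3 4 j) := by
  refine congrArg Finset.card (Finset.filter_congr fun a _ => ?_)
  rw [cls_s23, Equiv.swap_apply_eq_iff]

lemma nondeg (x y z : Card) (hyz : y ≠ z) : cnt x y z 0 + cnt x y z 2 < 4 := by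
  by_contra hc
  apply hyz
  have hd : Disjoint (Finset.univ.filter fun a : Fin 4 => cls (x a) (y a) (z a) = 0)
      (Finset.univ.filter fun a : Fin 4 => cls (x a) (y a) (z a) = 2) := by
    rw [Finset.disjoint_filter]; intro a _ h h'; rw [h] at h'; exact absurd h' (by decide)
  unfold cnt at hc
  rw [← Finset.card_union_of_disjoint hd] at hc
  have hu := Finset.eq_univ_of_card _ (le_antisymm (Finset.card_le_univ _)
    (by rw [Fintype.card_fin]; exact not_lt.1 hc))
  funext a
  have ha := Finset.mem_univ a
  rw [← hu] at ha
  simp only [Finset.mem_union, Finset.mem_filter, Finset.mem_univ, true_and] at ha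
  have : ∀ u v w : Fin 3, cls u v w = 0 ∨ cls u v w = 2 → v = w := by decide
  exact this _ _ _ ha

lemma swap_vals : (Equiv.swap (2 : Fin 5) 3 2 = 3) ∧ (Equiv.swap (2 : Fin 5) 3 3 = 2) ∧
    (Equiv.swap (2 : Fin 5) 3 4 = 4) ∧ (Equiv.swap (3 : Fin 5) 4 2 = 2) ∧
    (Equiv.swap (3 : Fin 5) 4 3 = 4) ∧ (Equiv.swap (3 : Fin 5) 4 4 = 3) := by decide

lemma t12 (x y z : Card) : ({x, y, z} : Finset Card) = {y, x, z} := Finset.insert_comm _ _ _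
lemma t23 (x y z : Card) : ({x, y, z} : Finset Card) = {x, z, y} := by
  rw [Finset.pair_comm y z]

lemma sorted (H : Finset Card) (h : H.card = 3) : ∃ x y z : Card, x ≠ y ∧ x ≠ z ∧ y ≠ z ∧
    H = {x, y, z} ∧ cnt x y z 3 ≤ cnt x y z 2 ∧ cnt x y z 4 ≤ cnt x y z 3 := by
  obtain ⟨x, y, z, hxy, hxz, hyz, rfl⟩ := Finset.card_eq_three.1 h
  obtain ⟨e1, e2, e3, e4, e5, e6⟩ := swap_vals
  have A : ∀ x y z : Card, cnt y x z 2 = cnt x y z 3 ∧ cnt y x z 3 = cnt x y z 2 ∧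
      cnt y x z 4 = cnt x y z 4 := fun x y z => by
    simp only [cnt_s12 x y z, e1, e2, e3, and_self]
  have B : ∀ x y z : Card, cnt x z y 2 = cnt x y z 2 ∧ cnt x z y 3 = cnt x y z 4 ∧
      cnt x z y 4 = cnt x y z 3 := fun x y z => by
    simp only [cnt_s23 x y z, e4, e5, e6, and_self]
  have a1 := A x y z
  have b1 := B x y z
  have a2 := A x z y
  have b2 := B y x z
  have a3 := B z x y
  have c : (cnt x y z 3 ≤ cnt x y z 2 ∧ cnt x y z 4 ≤ cnt x y z 3) ∨
    (cnt x z y 3 ≤ cnt x z y 2 ∧ cnt x z y 4 ≤ cnt x z y 3) ∨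
    (cnt y x z 3 ≤ cnt y x z 2 ∧ cnt y x z 4 ≤ cnt y x z 3) ∨
    (cnt y z x 3 ≤ cnt y z x 2 ∧ cnt y z x 4 ≤ cnt y z x 3) ∨
    (cnt z x y 3 ≤ cnt z x y 2 ∧ cnt z x y 4 ≤ cnt z x y 3) ∨
    (cnt z y x 3 ≤ cnt z y x 2 ∧ cnt z y x 4 ≤ cnt z y x 3) := by omega
  rcases c with c | c | c | c | c | c
  · exact ⟨x, y, z, hxy, hxz, hyz, rfl, c⟩
  · exact ⟨x, z, y, hxz, hxy, hyz.symm, t23 _ _ _, c⟩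
  · exact ⟨y, x, z, hxy.symm, hyz, hxz, t12 _ _ _, c⟩
  · exact ⟨y, z, x, hyz, hxy.symm, hxz.symm, (t12 _ _ _).trans (t23 _ _ _), c⟩
  · exact ⟨z, x, y, hxz.symm, hyz.symm, hxy, (t23 _ _ _).trans (t12 _ _ _), c⟩
  · exact ⟨z, y, x, hyz.symm, hxz.symm, hxy.symm,
      ((t23 _ _ _).trans (t12 _ _ _)).trans (t23 _ _ _), c⟩

lemma canon (H : Finset Card) (h : H.card = 3) : ∃ x y z : Card,
    H = {x, y, z} ∧ vec x y z ∈ tups ∧ hinv H = tf (vec x y z) := by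
  obtain ⟨x, y, z, hxy, hxz, hyz, rfl, h1, h2⟩ := sorted H h
  exact ⟨x, y, z, rfl, mem_tups _ _ _ _ _ (cnt_sum x y z) h1 h2 (nondeg x y z hyz),
    hinv_triple x y z hxy hxz hyz⟩

lemma exists_perm (k k' : Fin 4 → Fin 5)
    (h : ∀ j, (Finset.univ.filter fun a => k a = j).card =
      (Finset.univ.filter fun a => k' a = j).card) :
    ∃ ψ : Equiv.Perm (Fin 4), ∀ a, k' (ψ a) = k a := by
  have e : ∀ j, Nonempty ({a // k a = j} ≃ {a // k' a = j}) := fun j => by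
    refine ⟨Fintype.equivOfCardEq ?_⟩
    rw [Fintype.card_subtype, Fintype.card_subtype, h j]
  let E := fun j => (e j).some
  refine ⟨(Equiv.sigmaFiberEquiv k).symm.trans
    ((Equiv.sigmaCongrRight E).trans (Equiv.sigmaFiberEquiv k')), fun a => ?_⟩
  exact (E (k a) ⟨a, rfl⟩).2

lemma iso_of_vec (x y z x' y' z' : Card) (h : vec x y z = vec x' y' z') :
    Isomorphic {x, y, z} {x', y', z'} := by
  simp only [vec, Prod.mk.injEq] at h
  obtain ⟨h0, h1, h2, h3, h4⟩ := h
  obtain ⟨ψ, hψ⟩ := exists_perm (fun a => cls (x a) (y a) (z a))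
    (fun a => cls (x' a) (y' a) (z' a)) (fun j => by
      fin_cases j
      · exact h0
      · exact h1
      · exact h2
      · exact h3
      · exact h4)
  choose θ hx hy hz using fun a => cls_perm _ _ _ _ _ _ (hψ a).symm
  have key : ∀ u u' : Card, (∀ a, θ a (u a) = u' (ψ a)) → deckMap ψ θ u = u' := by
    intro u u' hu
    funext b
    simp [deckMap, hu]
  refine ⟨ψ, θ, ?_⟩
  simp only [Finset.image_insert, Finset.image_singleton, key x x' hx, key y y' hy, key z z' hz]

lemma iso_of_hinv (H H' : Finset Card) (h : H.card = 3) (h' : H'.card = 3)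
    (e : hinv H = hinv H') : Isomorphic H H' := by
  obtain ⟨x, y, z, rfl, m, i⟩ := canon H h
  obtain ⟨x', y', z', rfl, m', i'⟩ := canon H' h'
  exact iso_of_vec _ _ _ _ _ _ (tf_inj _ m _ m' (by rw [← i, ← i', e]))

/-- A representative with a given count vector. -/
def trep (t : ℕ × ℕ × ℕ × ℕ × ℕ) (l : Fin 5 → Fin 3) : Card := fun a =>
  if a.1 < t.1 then l 0 else if a.1 < t.1 + t.2.1 then l 1
  else if a.1 < t.1 + t.2.1 + t.2.2.1 then l 2
  else if a.1 < t.1 + t.2.1 + t.2.2.1 + t.2.2.2.1 then l 3 else l 4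

lemma trep_spec : ∀ t ∈ tups,
    let x := trep t ![0, 0, 1, 0, 0]
    let y := trep t ![0, 1, 0, 1, 0]
    let z := trep t ![0, 2, 0, 0, 1]
    x ≠ y ∧ x ≠ z ∧ y ≠ z ∧ vec x y z = t := by decide +kernel

/-- There are exactly 20 isomorphism classes of three-card hands: the quotient of the
set of 3-element subsets of the deck by the isomorphism relation has 20 elements. -/
theorem card_isoClasses_three_card_hands :
    Nat.card (Quot fun s t : {s : Finset Card // s.card = 3} =>
      Isomorphic s.1 t.1) = 20 := by
  let f : (Quot fun s t : {s : Finset Card // s.card = 3} => Isomorphic s.1 t.1) →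
      {v // v ∈ tups.image tf} :=
    Quot.lift (fun s => ⟨hinv s.1, by
      obtain ⟨x, y, z, _, m, i⟩ := canon s.1 s.2
      rw [i]; exact Finset.mem_image_of_mem _ m⟩)
      (fun s t h => Subtype.ext (hinv_iso h))
  have hf : Function.Bijective f := by
    constructor
    · rintro ⟨s⟩ ⟨t⟩ h
      exact Quot.sound (iso_of_hinv s.1 t.1 s.2 t.2 (congrArg Subtype.val h))
    · rintro ⟨v, hv⟩
      obtain ⟨t, ht, rfl⟩ := Finset.mem_image.1 hv
      obtain ⟨h1, h2, h3, h4⟩ := trep_spec t ht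
      refine ⟨Quot.mk _ ⟨_, Finset.card_eq_three.2 ⟨_, _, _, h1, h2, h3, rfl⟩⟩, Subtype.ext ?_⟩
      change hinv _ = tf t
      rw [hinv_triple _ _ _ h1 h2 h3, h4]
  rw [Nat.card_eq_of_bijective f hf, Nat.card_eq_fintype_card, Fintype.card_coe, tf_card]
end

section
/- The number of 3-element subsets of the SET deck that are Stuns is exactly 16848. -/
/-- A finite set of cards is a `Stun` if it has three cards and, in each attribute,
the three cards take exactly two distinct values. -/
def IsStun (s : Finset Card) : Prop :=
  s.card = 3 ∧ ∀ a : Fin 4, (s.image fun x => x a).card = 2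

instance : DecidablePred IsStun := fun s => by unfold IsStun; infer_instance

namespace StunProof

/-- three cards, zipped together -/
def mk (x y z : Card) : Fin 4 → Fin 3 × Fin 3 × Fin 3 := fun i => (x i, y i, z i)

theorem mk_inj (x y z x' y' z' : Card) : mk x y z = mk x' y' z' ↔ x = x' ∧ y = y' ∧ z = z' := by
  simp only [mk, funext_iff, Prod.mk.injEq]
  exact ⟨fun h => ⟨fun i => (h i).1, fun i => (h i).2.1, fun i => (h i).2.2⟩,
    fun h i => ⟨h.1 i, h.2.1 i, h.2.2 i⟩⟩

theorem mk_surj (w : Fin 4 → Fin 3 × Fin 3 × Fin 3) : ∃ x y z, w = mk x y z :=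
  ⟨fun i => (w i).1, fun i => (w i).2.1, fun i => (w i).2.2, rfl⟩

def G : Finset (Fin 3 × Fin 3 × Fin 3) :=
  Finset.univ.filter fun p => ({p.1, p.2.1, p.2.2} : Finset (Fin 3)).card = 2
def G1 : Finset (Fin 3 × Fin 3 × Fin 3) := G.filter fun p => p.1 = p.2.1
def G2 : Finset (Fin 3 × Fin 3 × Fin 3) := G.filter fun p => p.1 = p.2.2
def G3 : Finset (Fin 3 × Fin 3 × Fin 3) := G.filter fun p => p.2.1 = p.2.2

def W (g : Finset (Fin 3 × Fin 3 × Fin 3)) : Finset (Fin 4 → Fin 3 × Fin 3 × Fin 3) :=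
  Fintype.piFinset fun _ => g

theorem card_W (g : Finset (Fin 3 × Fin 3 × Fin 3)) : (W g).card = g.card ^ 4 := by
  simp [W]

theorem W_disj {g h : Finset (Fin 3 × Fin 3 × Fin 3)} (d : Disjoint g h) :
    Disjoint (W g) (W h) := by
  rw [Finset.disjoint_left] at *
  intro w h1 h2
  simp only [W, Fintype.mem_piFinset] at h1 h2
  exact d (h1 0) (h2 0)

theorem W_mono {g h : Finset (Fin 3 × Fin 3 × Fin 3)} (d : g ⊆ h) : W g ⊆ W h :=
  Fintype.piFinset_subset _ _ fun _ => d

def T := W G \ (W G1 ∪ W G2 ∪ W G3)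

theorem card_T : T.card = 101088 := by
  have c : G.card = 18 := by decide +kernel
  have c1 : G1.card = 6 := by decide +kernel
  have c2 : G2.card = 6 := by decide +kernel
  have c3 : G3.card = 6 := by decide +kernel
  have d12 : Disjoint G1 G2 := by decide +kernel
  have d13 : Disjoint G1 G3 := by decide +kernel
  have d23 : Disjoint G2 G3 := by decide +kernel
  rw [T, Finset.card_sdiff_of_subset, Finset.card_union_of_disjoint,
    Finset.card_union_of_disjoint (W_disj d12)]
  · simp only [card_W, c, c1, c2, c3]; norm_num
  · exact Finset.disjoint_union_left.2 ⟨W_disj d13, W_disj d23⟩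
  · refine Finset.union_subset (Finset.union_subset ?_ ?_) ?_ <;>
      exact W_mono (Finset.filter_subset _ _)

theorem mem_T (x y z : Card) : mk x y z ∈ T ↔
    (∀ i, ({x i, y i, z i} : Finset (Fin 3)).card = 2) ∧ x ≠ y ∧ x ≠ z ∧ y ≠ z := by
  simp only [T, W, G1, G2, G3, G, mk, Finset.mem_sdiff, Finset.mem_union, Fintype.mem_piFinset,
    Finset.mem_filter, Finset.mem_univ, true_and, forall_and, ne_eq, funext_iff]
  tauto

def f (w : Fin 4 → Fin 3 × Fin 3 × Fin 3) : Finset Card :=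
  {fun i => (w i).1, fun i => (w i).2.1, fun i => (w i).2.2}

theorem f_mk (x y z : Card) : f (mk x y z) = {x, y, z} := rfl

theorem stun_iff (x y z : Card) (h1 : x ≠ y) (h2 : x ≠ z) (h3 : y ≠ z) :
    IsStun {x, y, z} ↔ ∀ i, ({x i, y i, z i} : Finset (Fin 3)).card = 2 := by
  simp only [IsStun, Finset.image_insert, Finset.image_singleton]
  exact ⟨fun h => h.2, fun h => ⟨Finset.card_eq_three.2 ⟨x, y, z, h1, h2, h3, rfl⟩, h⟩⟩

theorem fiber (s : Finset Card) (hs : IsStun s) : (T.filter fun w => f w = s).card = 6 := by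
  obtain ⟨a, b, c, h1, h2, h3, rfl⟩ := Finset.card_eq_three.1 hs.1
  have key : (T.filter fun w => f w = {a, b, c}) =
      {mk a b c, mk a c b, mk b a c, mk b c a, mk c a b, mk c b a} := by
    ext w
    obtain ⟨x, y, z, rfl⟩ := mk_surj w
    simp only [Finset.mem_filter, f_mk, Finset.mem_insert, Finset.mem_singleton, mk_inj]
    constructor
    · rintro ⟨ht, he⟩
      obtain ⟨-, n1, n2, n3⟩ := (mem_T x y z).1 ht
      have hx : x ∈ ({a, b, c} : Finset Card) := by rw [← he]; simp
      have hy : y ∈ ({a, b, c} : Finset Card) := by rw [← he]; simp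
      have hz : z ∈ ({a, b, c} : Finset Card) := by rw [← he]; simp
      simp only [Finset.mem_insert, Finset.mem_singleton] at hx hy hz
      grind
    · intro h
      have he : ({x, y, z} : Finset Card) = {a, b, c} := by
        ext t
        simp only [Finset.mem_insert, Finset.mem_singleton]
        grind
      have n : x ≠ y ∧ x ≠ z ∧ y ≠ z := by grind
      refine ⟨(mem_T x y z).2 ⟨?_, n⟩, he⟩
      rw [← stun_iff x y z n.1 n.2.1 n.2.2, he]
      exact hs
  rw [key]
  simp [Finset.card_insert_of_notMem, mk_inj, h1, h2, h3, h1.symm, h2.symm, h3.symm]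

end StunProof

open StunProof in
/-- There are exactly 16848 three-card `Stuns` in the SET deck. -/
theorem card_stuns_eq_16848 :
    (((Finset.univ : Finset Card).powersetCard 3).filter IsStun).card = 16848 := by
  have h := Finset.card_eq_sum_card_fiberwise (f := f) (s := T)
    (t := ((Finset.univ : Finset Card).powersetCard 3).filter IsStun) (by
      intro w hw
      obtain ⟨x, y, z, rfl⟩ := mk_surj w
      obtain ⟨g, n1, n2, n3⟩ := (mem_T x y z).1 hw
      have := (stun_iff x y z n1 n2 n3).2 g
      rw [f_mk, Finset.mem_coe, Finset.mem_filter, Finset.mem_powersetCard]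
      exact ⟨⟨Finset.subset_univ _, this.1⟩, this⟩)
  rw [Finset.sum_congr rfl fun s hs => fiber s (Finset.mem_filter.1 hs).2, card_T,
    Finset.sum_const, smul_eq_mul] at h
  omega
end
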